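/- For every even n ≥ 8, the flow polynomial of the graph G* on n vertices equals F(G*,t) = (t−1)(t−2)^{n/2−2}(t−3)^2. -/

import Mathlib

open Polynomial

/-- The flow polynomial of a finite simple graph `G`:
`F(G,t) = Σ_{Z ⊆ E(G)} (−1)^{m−|Z|} t^{|Z|+c(Z)−n}`, where `c(Z)` is the number of
connected components of the spanning subgraph with edge set `Z`. -/
noncomputable def flowPoly {V : Type} [Fintype V] (G : SimpleGraph V) : Polynomial ℤ :=
  ∑ Z ∈ G.edgeSet.toFinite.toFinset.powerset,
    (-1 : ℤ) ^ (G.edgeSet.toFinite.toFinset.card - Z.card) •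
      (X : Polynomial ℤ) ^
        (Z.card + Nat.card (SimpleGraph.fromEdgeSet (↑Z : Set (Sym2 V))).ConnectedComponent
          - Fintype.card V)

/-- The number of edges of `G`. -/
noncomputable def edgeCount {V : Type} [Fintype V] (G : SimpleGraph V) : ℕ :=
  G.edgeSet.toFinite.toFinset.card

/-- Vertex type of the graph `G*`: `a1,…,a4`, `b1,…,b4`, and `u_j = (j,0)`, `v_j = (j,1)`
for `j = 0,…,s−1` (0-indexed). -/
abbrev GStarV (s : ℕ) : Type := Fin 4 ⊕ Fin 4 ⊕ (Fin s × Fin 2)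

/-- One orientation of each edge of `G*` (symmetrized by `SimpleGraph.fromRel`):
`K4` on the `a`'s minus `a1a2`, `K4` on the `b`'s minus `b1b2`, the ladder edges
`u_j v_j`, `u_j u_{j+1}`, `v_j v_{j+1}`, and the connecting edges
`a1u_1, a2v_1, u_s b1, v_s b2` (or `a1b1, a2b2` when `s = 0`). -/
def gStarRel (s : ℕ) : GStarV s → GStarV s → Prop
  | Sum.inl i, Sum.inl j => ¬((i = 0 ∧ j = 1) ∨ (i = 1 ∧ j = 0))
  | Sum.inr (Sum.inl i), Sum.inr (Sum.inl j) => ¬((i = 0 ∧ j = 1) ∨ (i = 1 ∧ j = 0))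
  | Sum.inr (Sum.inr p), Sum.inr (Sum.inr q) =>
      (p.1 = q.1 ∧ p.2 ≠ q.2) ∨ (p.2 = q.2 ∧ q.1.val = p.1.val + 1)
  | Sum.inl i, Sum.inr (Sum.inr p) =>
      (i = 0 ∧ p.1.val = 0 ∧ p.2 = 0) ∨ (i = 1 ∧ p.1.val = 0 ∧ p.2 = 1)
  | Sum.inr (Sum.inr p), Sum.inr (Sum.inl i) =>
      (p.1.val + 1 = s ∧ p.2 = 0 ∧ i = 0) ∨ (p.1.val + 1 = s ∧ p.2 = 1 ∧ i = 1)
  | Sum.inl i, Sum.inr (Sum.inl j) =>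
      s = 0 ∧ ((i = 0 ∧ j = 0) ∨ (i = 1 ∧ j = 1))
  | _, _ => False

/-- The graph `G*` with `n = 2s + 8` vertices. -/
def gStar (s : ℕ) : SimpleGraph (GStarV s) := SimpleGraph.fromRel (gStarRel s)

/-
For a finite colour set `Q` with `q` elements, `q ^ n * F(G, q)` is the partition function of a
Potts model: the sum over all vertex colourings of the product over the edges of `q - 1`
(monochromatic edge) or `-1` (bichromatic edge), as one sees by expanding the product over the
edges. For `G*` this sum is evaluated by a transfer matrix running along the ladder. With
`W = q • 1 - J` the matrix of edge weights, `W * J = 0`, `W * W = q • W` and the entrywise square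
of `W` is `(q - 2) • W + (q - 1) • J`. Hence passing two rails annihilates `J` and multiplies `W`
by `q ^ 2`, so `W` is an eigenvector of one ladder step (a rung and two rails) with eigenvalue
`q ^ 2 * (q - 2)`, and each copy of `K₄` minus an edge acts as a single weighted edge, a
combination of `W` and `J` with `W`-coefficient `q ^ 2 * (q - 2) * (q - 3)`.
-/

section ConnectedComponents

theorem card_adjInvariant_eq_pow {V Q : Type*} [Finite V] (G : SimpleGraph V) :
    Nat.card {g : V → Q // ∀ u v, G.Adj u v → g u = g v} =
      Nat.card Q ^ Nat.card G.ConnectedComponent := by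
  have eq_of_reachable (g : V → Q) (hg : ∀ u v, G.Adj u v → g u = g v) (u v : V)
      (p : G.Walk u v) : g u = g v := by
    induction p with
    | nil => rfl
    | cons h _ ih => exact (hg _ _ h).trans ih
  rw [← Nat.card_fun]
  exact Nat.card_congr
    { toFun := fun g ↦ SimpleGraph.ConnectedComponent.lift g.1 fun u v p _ ↦
        eq_of_reachable g.1 g.2 u v p
      invFun := fun f ↦ ⟨fun v ↦ f (G.connectedComponentMk v), fun _ _ h ↦
        congrArg f (SimpleGraph.ConnectedComponent.sound h.reachable)⟩
      left_inv := fun _ ↦ rfl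
      right_inv := fun f ↦ funext <| SimpleGraph.ConnectedComponent.ind fun _ ↦ rfl }

theorem card_le_card_edgeSet_add_card_connectedComponent {V : Type*} [Finite V]
    (G : SimpleGraph V) :
    Nat.card V ≤ Nat.card G.edgeSet + Nat.card G.ConnectedComponent := by
  classical
  have := Fintype.ofFinite G.ConnectedComponent
  let inclusion : (Σ C : G.ConnectedComponent, C.toSimpleGraph.edgeSet) → G.edgeSet :=
    fun e ↦ e.1.toSimpleGraph_hom.mapEdgeSet e.2
  have inclusion_injective : Function.Injective inclusion := by
    rintro ⟨C, e, he⟩ ⟨D, f, hf⟩ h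
    replace h : e.map Subtype.val = f.map Subtype.val := congrArg Subtype.val h
    obtain rfl : C = D := by
      induction e with | _ x y
      have hx : x.1 ∈ f.map Subtype.val := h ▸ Sym2.mem_mk_left _ _
      obtain ⟨z, -, hz⟩ := Sym2.mem_map.1 hx
      exact x.2.symm.trans (hz ▸ z.2)
    obtain rfl := Sym2.map.injective Subtype.val_injective h
    rfl
  calc Nat.card V = ∑ C : G.ConnectedComponent, Nat.card C := by
        rw [← Nat.card_sigma]
        exact Nat.card_congr (Equiv.sigmaFiberEquiv G.connectedComponentMk).symm
    _ ≤ ∑ C : G.ConnectedComponent, (Nat.card C.toSimpleGraph.edgeSet + 1) :=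
        Finset.sum_le_sum fun C _ ↦ C.connected_toSimpleGraph.card_vert_le_card_edgeSet_add_one
    _ = Nat.card (Σ C : G.ConnectedComponent, C.toSimpleGraph.edgeSet) +
          Nat.card G.ConnectedComponent := by
        simp [Finset.sum_add_distrib, Nat.card_sigma]
    _ ≤ Nat.card G.edgeSet + Nat.card G.ConnectedComponent := by
        gcongr
        exact Nat.card_le_card_of_injective _ inclusion_injective

variable {V : Type*} (Z : Finset (Sym2 V))

theorem forall_isDiag_map_iff {Q : Type*} (g : V → Q) :
    (∀ e ∈ Z, (e.map g).IsDiag) ↔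
      ∀ u v, (SimpleGraph.fromEdgeSet (Z : Set (Sym2 V))).Adj u v → g u = g v := by
  refine ⟨fun h u v huv ↦ by simpa using h s(u, v) huv.1, fun h e he ↦ ?_⟩
  induction e with | _ u v
  obtain rfl | huv := eq_or_ne u v
  · simp
  · simpa using h u v ⟨he, huv⟩

theorem card_le_card_add_card_connectedComponent_fromEdgeSet [Fintype V] :
    Fintype.card V ≤
      Z.card + Nat.card (SimpleGraph.fromEdgeSet (Z : Set (Sym2 V))).ConnectedComponent := by
  have card_edgeSet_le :
      Nat.card (SimpleGraph.fromEdgeSet (Z : Set (Sym2 V))).edgeSet ≤ Z.card := by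
    rw [SimpleGraph.edgeSet_fromEdgeSet, ← Set.ncard_coe_finset]
    exact Set.ncard_le_ncard Set.sdiff_subset Z.finite_toSet
  rw [← Nat.card_eq_fintype_card]
  exact (card_le_card_edgeSet_add_card_connectedComponent _).trans (by gcongr)

end ConnectedComponents

section PottsModel

open Matrix

/-- The matrix `q • 1 - J` with `q = card Q` and `J` the all-ones matrix: its `(x, y)` entry is the
weight of an edge whose ends are coloured `x` and `y` in the Potts model expansion of the flow
polynomial. -/
def pottsMatrix (Q : Type*) [Fintype Q] [DecidableEq Q] : Matrix Q Q ℤ :=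
  of fun x y ↦ (if x = y then (Fintype.card Q : ℤ) else 0) - 1

/-- The Potts weight of the edge `e` under the vertex colouring `g`. -/
def edgeWeight {V Q : Type*} [Fintype Q] [DecidableEq Q] (g : V → Q) (e : Sym2 V) : ℤ :=
  (if (e.map g).IsDiag then (Fintype.card Q : ℤ) else 0) - 1

variable {V Q : Type*} [Fintype Q] [DecidableEq Q]

theorem edgeWeight_mk (g : V → Q) (u v : V) :
    edgeWeight g s(u, v) = pottsMatrix Q (g u) (g v) := by
  simp [edgeWeight, pottsMatrix]

theorem edgeWeight_map {V' : Type*} (g : V' → Q) (f : V → V') (e : Sym2 V) :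
    edgeWeight g (e.map f) = edgeWeight (g ∘ f) e := by
  rw [edgeWeight, Sym2.map_map, edgeWeight]

theorem sum_prod_ite_isDiag [Fintype V] [DecidableEq V] (Z : Finset (Sym2 V)) :
    ∑ g : V → Q, ∏ e ∈ Z, (if (e.map g).IsDiag then (Fintype.card Q : ℤ) else 0) =
      (Fintype.card Q : ℤ) ^
        (Z.card +
          Nat.card (SimpleGraph.fromEdgeSet (Z : Set (Sym2 V))).ConnectedComponent) := by
  have card_monochromatic :
      (Finset.univ.filter fun g : V → Q ↦ ∀ e ∈ Z, (e.map g).IsDiag).card = Fintype.card Q ^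
        Nat.card (SimpleGraph.fromEdgeSet (Z : Set (Sym2 V))).ConnectedComponent := by
    simp_rw [← Fintype.card_subtype, ← Nat.card_eq_fintype_card, forall_isDiag_map_iff,
      card_adjInvariant_eq_pow]
  simp_rw [Finset.prod_ite_zero, Finset.prod_const]
  rw [← Finset.sum_filter, Finset.sum_const, card_monochromatic, nsmul_eq_mul, pow_add, mul_comm]
  push_cast
  rfl

theorem card_pow_mul_eval_flowPoly {V : Type} [Fintype V] [DecidableEq V] (G : SimpleGraph V) :
    (Fintype.card Q : ℤ) ^ Fintype.card V * (flowPoly G).eval (Fintype.card Q : ℤ) =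
      ∑ g : V → Q, ∏ e ∈ G.edgeSet.toFinite.toFinset, edgeWeight g e := by
  simp_rw [edgeWeight, sub_eq_add_neg, Finset.prod_add]
  rw [Finset.sum_comm, flowPoly, eval_finsetSum, Finset.mul_sum]
  refine Finset.sum_congr rfl fun Z hZ ↦ ?_
  rw [Finset.prod_const, Finset.card_sdiff_of_subset (Finset.mem_powerset.1 hZ), ← Finset.sum_mul,
    sum_prod_ite_isDiag,
    ← Nat.add_sub_cancel' (card_le_card_add_card_connectedComponent_fromEdgeSet Z),
    Nat.add_sub_cancel_left, pow_add]
  simp only [eval_smul, eval_pow, eval_X, smul_eq_mul]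
  ring

theorem transpose_pottsMatrix : (pottsMatrix Q)ᵀ = pottsMatrix Q := by
  ext
  simp [pottsMatrix, eq_comm]

theorem pottsMatrix_comm (x y : Q) : pottsMatrix Q x y = pottsMatrix Q y x :=
  congr_fun₂ transpose_pottsMatrix.symm x y

theorem pottsMatrix_mul_of_one : pottsMatrix Q * of 1 = 0 := by
  ext
  simp [pottsMatrix, mul_apply]

theorem pottsMatrix_mul_self :
    pottsMatrix Q * pottsMatrix Q = (Fintype.card Q : ℤ) • pottsMatrix Q := by
  have eq_smul_one_sub : pottsMatrix Q = (Fintype.card Q : ℤ) • 1 - of 1 := by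
    ext
    simp [pottsMatrix, Matrix.natCast_apply]
  nth_rw 2 [eq_smul_one_sub]
  rw [mul_sub, pottsMatrix_mul_of_one, sub_zero, mul_smul_comm, mul_one]

theorem pottsMatrix_mul_smul_add (α β : ℤ) :
    pottsMatrix Q * (α • pottsMatrix Q + β • of 1) = (α * Fintype.card Q) • pottsMatrix Q := by
  rw [mul_add, mul_smul_comm, mul_smul_comm, pottsMatrix_mul_of_one, pottsMatrix_mul_self,
    smul_zero, add_zero, smul_smul]

theorem pottsMatrix_apply_mul_self (x y : Q) :
    pottsMatrix Q x y * pottsMatrix Q x y =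
      (Fintype.card Q - 2) * pottsMatrix Q x y + (Fintype.card Q - 1) := by
  simp only [pottsMatrix, of_apply]
  split_ifs <;> ring

theorem sum_pottsMatrix (x : Q) : ∑ y, pottsMatrix Q x y = 0 := by
  simp [pottsMatrix]

theorem sum_pottsMatrix_mul_pottsMatrix (x y : Q) :
    ∑ z, pottsMatrix Q x z * pottsMatrix Q y z = Fintype.card Q * pottsMatrix Q x y := by
  simp_rw [pottsMatrix_comm y, ← mul_apply, pottsMatrix_mul_self,
    Matrix.smul_apply, smul_eq_mul]

theorem trace_pottsMatrix :
    (pottsMatrix Q).trace = (Fintype.card Q : ℤ) * (Fintype.card Q - 1) := by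
  simp [pottsMatrix, trace, mul_sub]

theorem dotProduct_pottsMatrix_mulVec (a : Q → ℤ) :
    a ⬝ᵥ pottsMatrix Q *ᵥ a = Fintype.card Q * ∑ x, a x ^ 2 - (∑ x, a x) ^ 2 := by
  have mulVec_apply (x : Q) : (pottsMatrix Q *ᵥ a) x = Fintype.card Q * a x - ∑ y, a y := by
    simp [mulVec, dotProduct, pottsMatrix, sub_mul, ite_mul, Finset.sum_sub_distrib]
  simp only [dotProduct, mulVec_apply, mul_sub, Finset.sum_sub_distrib, ← Finset.sum_mul]
  simp only [sq, Finset.mul_sum, mul_left_comm]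

theorem sum_sq_pottsMatrix_mul_pottsMatrix (x y : Q) :
    ∑ z, (pottsMatrix Q x z * pottsMatrix Q y z) ^ 2 =
      Fintype.card Q * ((Fintype.card Q - 2) ^ 2 * pottsMatrix Q x y +
        (Fintype.card Q - 1) ^ 2) := by
  have sq_eq (z : Q) : (pottsMatrix Q x z * pottsMatrix Q y z) ^ 2 =
      (Fintype.card Q - 2) ^ 2 * (pottsMatrix Q x z * pottsMatrix Q y z) +
        (Fintype.card Q - 2) * (Fintype.card Q - 1) * (pottsMatrix Q x z + pottsMatrix Q y z) +
        (Fintype.card Q - 1) ^ 2 := by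
    rw [mul_pow, sq, sq, pottsMatrix_apply_mul_self, pottsMatrix_apply_mul_self]
    ring
  simp only [sq_eq, Finset.sum_add_distrib, ← Finset.mul_sum, sum_pottsMatrix,
    sum_pottsMatrix_mul_pottsMatrix, Finset.sum_const, Finset.card_univ, nsmul_eq_mul]
  ring

/-- The effective weight of `K₄` minus an edge as a network between the two non-adjacent vertices:
the entry at `(x, y)` sums the weights of the colourings of the two other vertices, where the
terminals are coloured `x` and `y`. -/
def kiteMatrix (Q : Type*) [Fintype Q] [DecidableEq Q] : Matrix Q Q ℤ :=
  of fun x y ↦ ∑ p : Q × Q, pottsMatrix Q x p.1 * pottsMatrix Q x p.2 * pottsMatrix Q y p.1 *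
    pottsMatrix Q y p.2 * pottsMatrix Q p.1 p.2

theorem kiteMatrix_eq :
    kiteMatrix Q =
      (Fintype.card Q ^ 2 * (Fintype.card Q - 2) * (Fintype.card Q - 3) : ℤ) • pottsMatrix Q +
        (Fintype.card Q ^ 2 * (Fintype.card Q - 1) * (Fintype.card Q - 2) : ℤ) • of 1 := by
  ext x y
  let a (z : Q) : ℤ := pottsMatrix Q x z * pottsMatrix Q y z
  have kiteMatrix_apply : kiteMatrix Q x y = a ⬝ᵥ pottsMatrix Q *ᵥ a := by
    simp only [kiteMatrix, of_apply, Fintype.sum_prod_type, dotProduct, mulVec, Finset.mul_sum, a]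
    exact Finset.sum_congr rfl fun _ _ ↦ Finset.sum_congr rfl fun _ _ ↦ by ring
  rw [kiteMatrix_apply, dotProduct_pottsMatrix_mulVec, sum_sq_pottsMatrix_mul_pottsMatrix,
    sum_pottsMatrix_mul_pottsMatrix]
  simp only [Matrix.add_apply, Matrix.smul_apply, of_apply, Pi.one_apply, smul_eq_mul, mul_one]
  linear_combination -(Fintype.card Q : ℤ) ^ 2 * pottsMatrix_apply_mul_self x y

end PottsModel

section TransferMatrix

open Matrix
open scoped Kronecker

theorem sum_prod_path_eq_pow_mulVec {P R : Type*} [Fintype P] [DecidableEq P] [CommSemiring R]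
    (T : Matrix P P R) (ψ : P → R) {n : ℕ} (x : P) :
    ∑ c : Fin n → P,
        (∏ i : Fin n, T (vecCons x c i.castSucc) (c i)) * ψ (vecCons x c (Fin.last n)) =
      (T ^ n *ᵥ ψ) x := by
  induction n generalizing x with
  | zero => simp
  | succ n ih =>
    rw [← (Fin.consEquiv fun _ ↦ P).sum_comp, Fintype.sum_prod_type, pow_succ', ← mulVec_mulVec,
      mulVec, dotProduct]
    refine Finset.sum_congr rfl fun z _ ↦ ?_
    simp only [Fin.consEquiv_apply, Fin.prod_univ_succ, Fin.castSucc_zero,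
      ← Fin.succ_castSucc, ← Fin.succ_last, cons_val_zero, cons_val_succ, mul_assoc]
    rw [← ih, Finset.mul_sum]
    rfl

theorem pow_mulVec_of_mulVec_eq_smul {P R : Type*} [Fintype P] [DecidableEq P] [CommSemiring R]
    {T : Matrix P P R} {v : P → R} {r : R} (hv : T *ᵥ v = r • v) (n : ℕ) :
    T ^ n *ᵥ v = r ^ n • v := by
  induction n with
  | zero => simp
  | succ n ih => rw [pow_succ, ← mulVec_mulVec, hv, mulVec_smul, ih, smul_smul, pow_succ']

variable (Q : Type*) [Fintype Q] [DecidableEq Q]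

/-- The weight of a pair of parallel edges, one on each rail of the ladder, as a matrix indexed by
the colourings of two consecutive columns. -/
def railMatrix : Matrix (Q × Q) (Q × Q) ℤ :=
  pottsMatrix Q ⊗ₖ pottsMatrix Q

/-- The weight of a pair of parallel rail edges followed by a rung. -/
def rungMatrix : Matrix (Q × Q) (Q × Q) ℤ :=
  railMatrix Q * diagonal (vec (pottsMatrix Q))

variable {Q}

theorem railMatrix_mulVec_vec_add (α β : ℤ) :
    railMatrix Q *ᵥ vec (α • pottsMatrix Q + β • of 1) =
      (α * Fintype.card Q ^ 2) • vec (pottsMatrix Q) := by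
  rw [railMatrix, kronecker_mulVec_vec, transpose_pottsMatrix, pottsMatrix_mul_smul_add,
    smul_mul_assoc, pottsMatrix_mul_self, smul_smul, vec_smul, sq, mul_assoc]

theorem rungMatrix_mulVec_vec_pottsMatrix :
    rungMatrix Q *ᵥ vec (pottsMatrix Q) =
      (Fintype.card Q ^ 2 * (Fintype.card Q - 2) : ℤ) • vec (pottsMatrix Q) := by
  have diagonal_mulVec_vec : diagonal (vec (pottsMatrix Q)) *ᵥ vec (pottsMatrix Q) =
      vec ((Fintype.card Q - 2 : ℤ) • pottsMatrix Q + (Fintype.card Q - 1 : ℤ) • of 1) := by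
    ext p
    simpa [mulVec_diagonal, vec, -zsmul_eq_mul] using pottsMatrix_apply_mul_self p.2 p.1
  rw [rungMatrix, ← mulVec_mulVec, diagonal_mulVec_vec, railMatrix_mulVec_vec_add, mul_comm]

theorem vec_kiteMatrix_dotProduct_vec_pottsMatrix :
    vec (kiteMatrix Q) ⬝ᵥ vec (pottsMatrix Q) =
      Fintype.card Q ^ 4 * (Fintype.card Q - 1) * (Fintype.card Q - 2) * (Fintype.card Q - 3) := by
  rw [dotProduct_comm, vec_dotProduct_vec, transpose_pottsMatrix, kiteMatrix_eq,
    pottsMatrix_mul_smul_add, trace_smul, trace_pottsMatrix, smul_eq_mul]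
  ring

theorem vec_kiteMatrix_dotProduct_rungMatrix_pow_mulVec (s : ℕ) :
    vec (kiteMatrix Q) ⬝ᵥ (rungMatrix Q ^ s *ᵥ (railMatrix Q *ᵥ vec (kiteMatrix Q))) =
      (Fintype.card Q : ℤ) ^ (2 * s + 8) *
        ((Fintype.card Q - 1) * (Fintype.card Q - 2) ^ (s + 2) * (Fintype.card Q - 3) ^ 2) := by
  nth_rw 2 [kiteMatrix_eq]
  rw [railMatrix_mulVec_vec_add, mulVec_smul,
    pow_mulVec_of_mulVec_eq_smul rungMatrix_mulVec_vec_pottsMatrix, dotProduct_smul,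
    dotProduct_smul, vec_kiteMatrix_dotProduct_vec_pottsMatrix, smul_eq_mul, smul_eq_mul, mul_pow]
  ring

end TransferMatrix

section GStar

open Matrix
open scoped Kronecker

/-- The five edges of `K₄` minus the edge between `0` and `1`. -/
def kiteEdge : Fin 5 → Sym2 (Fin 4) :=
  ![s(0, 2), s(0, 3), s(1, 2), s(1, 3), s(2, 3)]

variable {s : ℕ}

/-- The vertices along the path through `u₁, …, u_s` (for `ε = 0`) or `v₁, …, v_s` (for `ε = 1`),
including the terminals of the two copies of `K₄` minus an edge at its ends. -/
def railVertex (ε : Fin 2) : Fin (s + 2) → GStarV s :=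
  Fin.cons (Sum.inl (ε.castLE (by decide))) <|
    Fin.snoc (fun j ↦ Sum.inr (Sum.inr (j, ε))) (Sum.inr (Sum.inl (ε.castLE (by decide))))

/-- Labels for the edges of `G*`: those of the two copies of `K₄` minus an edge, the rungs, and
the edges of the two rails. -/
abbrev GStarEdgeIndex (s : ℕ) : Type := Fin 5 ⊕ Fin 5 ⊕ Fin s ⊕ (Fin (s + 1) × Fin 2)

/-- The edge of `G*` with a given label. A rung is written from `v_j` to `u_j` to match
`Matrix.vec`, whose entry at `(x, y)` is the matrix entry at `(y, x)`. -/
def gStarEdge : GStarEdgeIndex s → Sym2 (GStarV s)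
  | Sum.inl k => (kiteEdge k).map Sum.inl
  | Sum.inr (Sum.inl k) => (kiteEdge k).map fun i ↦ Sum.inr (Sum.inl i)
  | Sum.inr (Sum.inr (Sum.inl j)) => s(Sum.inr (Sum.inr (j, 1)), Sum.inr (Sum.inr (j, 0)))
  | Sum.inr (Sum.inr (Sum.inr (i, ε))) => s(railVertex ε i.castSucc, railVertex ε i.succ)

/-- The column of a vertex in the drawing of `G*` as a ladder. -/
def column : GStarV s → Fin (s + 2)
  | Sum.inl _ => 0
  | Sum.inr (Sum.inl _) => Fin.last _
  | Sum.inr (Sum.inr p) => p.1.castSucc.succ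

theorem railVertex_zero (ε : Fin 2) :
    railVertex (s := s) ε 0 = Sum.inl (ε.castLE (by decide)) :=
  rfl

theorem railVertex_castSucc_succ (ε : Fin 2) (j : Fin s) :
    railVertex ε j.castSucc.succ = Sum.inr (Sum.inr (j, ε)) := by
  simp [railVertex]

theorem railVertex_last (ε : Fin 2) :
    railVertex ε (Fin.last (s + 1)) = Sum.inr (Sum.inl (ε.castLE (by decide))) := by
  rw [railVertex, ← Fin.succ_last, Fin.cons_succ, Fin.snoc_last]

theorem eq_zero_or_eq_last_or_exists_eq_castSucc_succ (i : Fin (s + 2)) :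
    i = 0 ∨ i = Fin.last (s + 1) ∨ ∃ j : Fin s, i = j.castSucc.succ := by
  cases i using Fin.cases with
  | zero => exact Or.inl rfl
  | succ i =>
    cases i using Fin.lastCases with
    | last => exact Or.inr (Or.inl (Fin.succ_last _))
    | cast j => exact Or.inr (Or.inr ⟨j, rfl⟩)

theorem column_railVertex (ε : Fin 2) (i : Fin (s + 2)) : column (railVertex ε i) = i := by
  obtain rfl | rfl | ⟨j, rfl⟩ := eq_zero_or_eq_last_or_exists_eq_castSucc_succ i
  · rfl
  · rw [railVertex_last, column]
  · rw [railVertex_castSucc_succ, column]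

theorem railVertex_injective2 : Function.Injective2 (railVertex (s := s)) := by
  intro ε ε' i i' h
  obtain rfl : i = i' := by simpa only [column_railVertex] using congrArg column h
  refine ⟨?_, rfl⟩
  obtain rfl | rfl | ⟨j, rfl⟩ := eq_zero_or_eq_last_or_exists_eq_castSucc_succ i
  · simpa [railVertex_zero] using h
  · simpa [railVertex_last] using h
  · simpa [railVertex_castSucc_succ] using h

theorem kiteEdge_injective : Function.Injective kiteEdge := by
  decide

theorem map_column_gStarEdge (k : GStarEdgeIndex s) :
    (gStarEdge k).map column =
      match k with
      | Sum.inl _ => s(0, 0)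
      | Sum.inr (Sum.inl _) => s(Fin.last _, Fin.last _)
      | Sum.inr (Sum.inr (Sum.inl j)) => s(j.castSucc.succ, j.castSucc.succ)
      | Sum.inr (Sum.inr (Sum.inr (i, _))) => s(i.castSucc, i.succ) := by
  rcases k with k | k | j | ⟨i, ε⟩
  · rw [gStarEdge]
    induction kiteEdge k with | _ i j
    rfl
  · rw [gStarEdge]
    induction kiteEdge k with | _ i j
    rfl
  · rfl
  · simp only [gStarEdge, Sym2.map_mk, column_railVertex]

theorem gStarEdge_injective : Function.Injective (gStarEdge (s := s)) := by
  intro k k' h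
  have columns_eq := congrArg (Sym2.map column) h
  simp only [map_column_gStarEdge] at columns_eq
  rcases k with k | k | j | ⟨i, ε⟩ <;> rcases k' with k' | k' | j' | ⟨i', ε'⟩
  case inl.inl =>
    rw [kiteEdge_injective (Sym2.map.injective Sum.inl_injective h)]
  case inr.inl.inr.inl =>
    rw [kiteEdge_injective
      (Sym2.map.injective (Sum.inr_injective.comp Sum.inl_injective) h)]
  case inr.inr.inl.inr.inr.inl =>
    simpa using columns_eq
  case inr.inr.inr.inr.inr.inr =>
    obtain h | h := Sym2.eq_iff.1 h
    · obtain ⟨rfl, succ_eq⟩ := railVertex_injective2 h.2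
      rw [Fin.succ_injective _ succ_eq]
    · simp only [railVertex_injective2.eq_iff, Fin.ext_iff, Fin.val_succ, Fin.val_castSucc] at h
      omega
  all_goals
    simp only [Sym2.eq_iff, Fin.ext_iff, Fin.val_zero, Fin.val_last, Fin.val_succ,
      Fin.val_castSucc] at columns_eq
    omega

theorem gStarRel_railVertex (ε : Fin 2) {i i' : Fin (s + 2)} (h : i'.val = i.val + 1) :
    gStarRel s (railVertex ε i) (railVertex ε i') := by
  obtain rfl | rfl | ⟨j, rfl⟩ := eq_zero_or_eq_last_or_exists_eq_castSucc_succ i <;>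
    obtain rfl | rfl | ⟨j', rfl⟩ := eq_zero_or_eq_last_or_exists_eq_castSucc_succ i' <;>
    simp only [railVertex_zero, railVertex_last, railVertex_castSucc_succ, gStarRel,
      Fin.val_zero, Fin.val_last, Fin.val_succ, Fin.val_castSucc] at h ⊢ <;>
    fin_cases ε <;> grind

theorem exists_kiteEdge_eq {i j : Fin 4} (ne : i ≠ j)
    (h : ¬((i = 0 ∧ j = 1) ∨ (i = 1 ∧ j = 0))) : ∃ k, kiteEdge k = s(i, j) := by
  revert i j
  decide

theorem gStarEdge_mem_edgeSet (k : GStarEdgeIndex s) : gStarEdge k ∈ (gStar s).edgeSet := by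
  rcases k with k | k | j | ⟨i, ε⟩
  · fin_cases k <;> simp [gStarEdge, kiteEdge, gStar, gStarRel]
  · fin_cases k <;> simp [gStarEdge, kiteEdge, gStar, gStarRel]
  · simp [gStarEdge, gStar, gStarRel]
  · have ne : railVertex ε i.castSucc ≠ railVertex ε i.succ := fun h ↦
      Fin.castSucc_lt_succ.ne (railVertex_injective2 h).2
    have rel : gStarRel s (railVertex ε i.castSucc) (railVertex ε i.succ) :=
      gStarRel_railVertex ε rfl
    exact ⟨ne, Or.inl rel⟩

theorem exists_gStarEdge_eq_of_val_eq_succ (ε : Fin 2) {i i' : Fin (s + 2)}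
    (h : i'.val = i.val + 1) : ∃ k, gStarEdge k = s(railVertex ε i, railVertex ε i') := by
  obtain ⟨j, rfl⟩ : ∃ j, Fin.succ j = i' := Fin.exists_succ_eq.2 <| by
    rintro rfl
    simp at h
  obtain rfl : i = j.castSucc := Fin.ext (by simpa using h.symm)
  exact ⟨Sum.inr (Sum.inr (Sum.inr (j, ε))), rfl⟩

theorem exists_gStarEdge_eq {x y : GStarV s} (ne : x ≠ y) (h : gStarRel s x y) :
    ∃ k, gStarEdge k = s(x, y) := by
  rcases x with i | i | ⟨i, ε⟩ <;> rcases y with j | j | ⟨j, δ⟩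
  case inl.inl =>
    obtain ⟨k, hk⟩ := exists_kiteEdge_eq (by simpa using ne) h
    exact ⟨Sum.inl k, by simp [gStarEdge, hk]⟩
  case inr.inl.inr.inl =>
    obtain ⟨k, hk⟩ := exists_kiteEdge_eq (by simpa using ne) h
    exact ⟨Sum.inr (Sum.inl k), by simp [gStarEdge, hk]⟩
  case inl.inr.inl =>
    obtain ⟨rfl, ⟨rfl, rfl⟩ | ⟨rfl, rfl⟩⟩ := h
    · exact exists_gStarEdge_eq_of_val_eq_succ 0 (i := 0) (i' := 1) rfl
    · exact exists_gStarEdge_eq_of_val_eq_succ 1 (i := 0) (i' := 1) rfl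
  case inl.inr.inr =>
    have exists_rail (δ : Fin 2) (hj : j.val = 0) :=
      exists_gStarEdge_eq_of_val_eq_succ δ (i := 0) (i' := j.castSucc.succ) (by simpa using hj)
    simp only [railVertex_zero, railVertex_castSucc_succ] at exists_rail
    obtain ⟨rfl, hj, rfl⟩ | ⟨rfl, hj, rfl⟩ := h
    · exact exists_rail 0 hj
    · exact exists_rail 1 hj
  case inr.inr.inr.inl =>
    have exists_rail (ε : Fin 2) (hi : i.val + 1 = s) :=
      exists_gStarEdge_eq_of_val_eq_succ ε (i := i.castSucc.succ) (i' := Fin.last _)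
        (by simpa using hi.symm)
    simp only [railVertex_last, railVertex_castSucc_succ] at exists_rail
    obtain ⟨hi, rfl, rfl⟩ | ⟨hi, rfl, rfl⟩ := h
    · exact exists_rail 0 hi
    · exact exists_rail 1 hi
  case inr.inr.inr.inr =>
    obtain ⟨rfl, hεδ⟩ | ⟨rfl, hj⟩ := h
    · replace hεδ : ε ≠ δ := hεδ
      refine ⟨Sum.inr (Sum.inr (Sum.inl i)), ?_⟩
      simp only [gStarEdge, Sym2.eq_iff, Sum.inr.injEq, Prod.mk.injEq, true_and]
      omega
    · simpa only [railVertex_castSucc_succ] using exists_gStarEdge_eq_of_val_eq_succ ε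
        (i := i.castSucc.succ) (i' := j.castSucc.succ) (by simpa using hj)
  all_goals exact h.elim

theorem prod_edgeSet_gStar {M : Type*} [CommMonoid M] (f : Sym2 (GStarV s) → M) :
    ∏ e ∈ (gStar s).edgeSet.toFinite.toFinset, f e = ∏ k, f (gStarEdge k) := by
  have edgeSet_eq : (gStar s).edgeSet.toFinite.toFinset = Finset.univ.image gStarEdge := by
    ext e
    simp only [Set.Finite.mem_toFinset, Finset.mem_image, Finset.mem_univ, true_and]
    refine ⟨fun he ↦ ?_, ?_⟩
    · induction e with | _ x y
      obtain ⟨ne, h | h⟩ := he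
      · exact exists_gStarEdge_eq ne h
      · exact Sym2.eq_swap ▸ exists_gStarEdge_eq ne.symm h
    · rintro ⟨k, rfl⟩
      exact gStarEdge_mem_edgeSet k
  rw [edgeSet_eq, Finset.prod_image gStarEdge_injective.injOn]

/-- A vertex colouring of `G*` consists of a colouring of the `aᵢ`, a colouring of the columns
`(u_j, v_j)` and a colouring of the `bᵢ`. -/
def coloringEquiv (s : ℕ) (Q : Type*) :
    (GStarV s → Q) ≃ (Fin 4 → Q) × (Fin s → Q × Q) × (Fin 4 → Q) where
  toFun g := (fun i ↦ g (Sum.inl i),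
    fun j ↦ (g (Sum.inr (Sum.inr (j, 0))), g (Sum.inr (Sum.inr (j, 1)))),
    fun i ↦ g (Sum.inr (Sum.inl i)))
  invFun t := Sum.elim t.1 (Sum.elim t.2.2 fun p ↦ ![(t.2.1 p.1).1, (t.2.1 p.1).2] p.2)
  left_inv g := by
    ext (i | i | ⟨j, ε⟩)
    · rfl
    · rfl
    · fin_cases ε <;> rfl
  right_inv _ := rfl

variable {Q : Type*} [Fintype Q] [DecidableEq Q]

/-- The Potts weight of a vertex colouring of `K₄` minus an edge. -/
def kiteWeight (κ : Fin 4 → Q) : ℤ :=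
  ∏ k, edgeWeight κ (kiteEdge k)

theorem sum_kiteWeight_mul (φ : Q × Q → ℤ) :
    ∑ κ : Fin 4 → Q, kiteWeight κ * φ (κ 0, κ 1) = vec (kiteMatrix Q) ⬝ᵥ φ := by
  let e : (Q × Q) × (Q × Q) ≃ (Fin 4 → Q) :=
    ((finTwoArrowEquiv Q).symm.prodCongr (finTwoArrowEquiv Q).symm).trans (Fin.appendEquiv 2 2)
  rw [← e.sum_comp, Fintype.sum_prod_type, dotProduct]
  refine Finset.sum_congr rfl fun p _ ↦ ?_
  rw [vec, kiteMatrix, of_apply, Finset.sum_mul]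
  refine Finset.sum_congr rfl fun r _ ↦ ?_
  have e_apply : e (p, r) = ![p.1, p.2, r.1, r.2] := by
    ext i; fin_cases i <;> rfl
  simp only [e_apply, kiteWeight, kiteEdge, Fin.prod_univ_five, cons_val, edgeWeight_mk]
  ring

theorem prod_edgeWeight_coloringEquiv_symm (a b : Fin 4 → Q) (c : Fin s → Q × Q) :
    ∏ e ∈ (gStar s).edgeSet.toFinite.toFinset,
        edgeWeight ((coloringEquiv s Q).symm (a, c, b)) e =
      kiteWeight a *
        ((∏ j : Fin s, rungMatrix Q (vecCons (a 0, a 1) c j.castSucc) (c j)) *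
          (kiteWeight b * railMatrix Q (vecCons (a 0, a 1) c (Fin.last s)) (b 0, b 1))) := by
  generalize hg : (coloringEquiv s Q).symm (a, c, b) = g
  have comp_inl : g ∘ Sum.inl = a := by subst hg; rfl
  have comp_inr_inl : (g ∘ fun i ↦ Sum.inr (Sum.inl i)) = b := by subst hg; rfl
  have column_eq (j : Fin s) :
      c j = (g (Sum.inr (Sum.inr (j, 0))), g (Sum.inr (Sum.inr (j, 1)))) := by
    subst hg; rfl
  have last_column_eq :
      (b 0, b 1) =
        (g (railVertex 0 (Fin.last s).succ), g (railVertex 1 (Fin.last s).succ)) := by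
    subst hg; rw [Fin.succ_last, railVertex_last, railVertex_last]; rfl
  have vecCons_eq (i : Fin (s + 1)) :
      vecCons (a 0, a 1) c i =
        (g (railVertex 0 i.castSucc), g (railVertex 1 i.castSucc)) := by
    cases i using Fin.cases with
    | zero => subst hg; rfl
    | succ j =>
      rw [← Fin.succ_castSucc, railVertex_castSucc_succ, railVertex_castSucc_succ, cons_val_succ,
        column_eq]
  simp_rw [prod_edgeSet_gStar, Fintype.prod_sum_type, Fintype.prod_prod_type,
    Fin.prod_univ_castSucc (n := s), Fin.prod_univ_two, gStarEdge, edgeWeight_map, edgeWeight_mk,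
    comp_inl, comp_inr_inl, railVertex_castSucc_succ, vecCons_eq, column_eq, last_column_eq,
    rungMatrix, mul_diagonal, railMatrix, kronecker_apply, vec, Finset.prod_mul_distrib,
    kiteWeight]
  ring

theorem sum_prod_edgeWeight_gStar :
    ∑ g : GStarV s → Q, ∏ e ∈ (gStar s).edgeSet.toFinite.toFinset, edgeWeight g e =
      vec (kiteMatrix Q) ⬝ᵥ (rungMatrix Q ^ s *ᵥ (railMatrix Q *ᵥ vec (kiteMatrix Q))) := by
  have sum_right (x : Q × Q) :
      ∑ b : Fin 4 → Q, kiteWeight b * railMatrix Q x (b 0, b 1) =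
        (railMatrix Q *ᵥ vec (kiteMatrix Q)) x := by
    rw [sum_kiteWeight_mul, dotProduct_comm, mulVec]
  rw [← (coloringEquiv s Q).symm.sum_comp]
  simp_rw [Fintype.sum_prod_type, prod_edgeWeight_coloringEquiv_symm, ← Finset.mul_sum, sum_right,
    sum_prod_path_eq_pow_mulVec]
  exact sum_kiteWeight_mul _

theorem flowPoly_gStar (s : ℕ) :
    flowPoly (gStar s) = (X - 1) * (X - 2) ^ (s + 2) * (X - 3) ^ 2 := by
  have card_gStarV : Fintype.card (GStarV s) = 2 * s + 8 := by
    simp only [Fintype.card_sum, Fintype.card_prod, Fintype.card_fin]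
    ring
  have eval_eq (m : ℕ) : (flowPoly (gStar s)).eval (m + 1 : ℤ) =
      ((X - 1) * (X - 2) ^ (s + 2) * (X - 3) ^ 2 : ℤ[X]).eval (m + 1 : ℤ) := by
    have key := card_pow_mul_eval_flowPoly (Q := Fin (m + 1)) (gStar s)
    rw [sum_prod_edgeWeight_gStar, vec_kiteMatrix_dotProduct_rungMatrix_pow_mulVec, card_gStarV,
      Fintype.card_fin] at key
    simpa using mul_left_cancel₀ (by positivity) key
  exact eq_of_infinite_eval_eq _ _ <| Set.infinite_of_injective_forall_mem
    (f := fun m : ℕ ↦ (m + 1 : ℤ)) (fun _ _ h ↦ by simpa using h) eval_eq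

end GStar

/-- The flow polynomial of `G*` on `n` vertices is `(t−1)(t−2)^{n/2−2}(t−3)^2`. -/
theorem stmt_6 (n : ℕ) (heven : Even n) (hn8 : 8 ≤ n) :
    flowPoly (gStar (n / 2 - 4)) =
      (X - 1) * (X - 2) ^ (n / 2 - 2) * (X - 3) ^ 2 := by
  have exponent_eq : n / 2 - 2 = n / 2 - 4 + 2 := by omega
  rw [flowPoly_gStar, exponent_eq]
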